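/- Let T be a tree on n ≥ 4 vertices with diam(T) = 2d+1 for some positive integer d. Then 𝓔(T) has exactly two positive eigenvalues and two negative eigenvalues, i.e., the inertia of 𝓔(T) is (2, 2, n−4). -/

import Mathlib

open SimpleGraph Finset Matrix Polynomial

/-- The eccentricity of a vertex: the greatest distance from `u` to any vertex. -/
noncomputable def ecc {V : Type*} [Fintype V] (G : SimpleGraph V) (u : V) : ℕ :=
  Finset.univ.sup fun v => G.dist u v

/-- The diameter of a graph: the greatest distance between any pair of vertices. -/
noncomputable def gdiam {V : Type*} [Fintype V] (G : SimpleGraph V) : ℕ :=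
  Finset.univ.sup fun p : V × V => G.dist p.1 p.2

/-- The eccentricity matrix: `(u,v)` entry is `d(u,v)` if `d(u,v) = min (e u) (e v)`,
and `0` otherwise. -/
noncomputable def eccMatrix {V : Type*} [Fintype V] (G : SimpleGraph V) : Matrix V V ℝ :=
  Matrix.of fun u v =>
    if G.dist u v = min (ecc G u) (ecc G v) then (G.dist u v : ℝ) else 0

/-- The number of positive eigenvalues (with multiplicity) of a real matrix,
counted as roots of the characteristic polynomial. -/
noncomputable def posEigs {m : Type*} [Fintype m] [DecidableEq m] (M : Matrix m m ℝ) : ℕ :=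
  Multiset.card (M.charpoly.roots.filter fun x => 0 < x)

/-- The number of negative eigenvalues (with multiplicity). -/
noncomputable def negEigs {m : Type*} [Fintype m] [DecidableEq m] (M : Matrix m m ℝ) : ℕ :=
  Multiset.card (M.charpoly.roots.filter fun x => x < 0)

/-- The number of zero eigenvalues (with multiplicity). -/
noncomputable def zeroEigs {m : Type*} [Fintype m] [DecidableEq m] (M : Matrix m m ℝ) : ℕ :=
  Multiset.card (M.charpoly.roots.filter fun x => x = 0)

/-!
The central edge `ab` of the tree is a bridge. Two vertices on the same side of it are closer than
the eccentricity of either, so `𝓔(T)` vanishes outside the two off-diagonal blocks; its spectrum is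
then symmetric about `0` and it remains to see that its rank is `4`. If `u` is on the side of `a`,
then `e(u) = d(u, a) + d + 1`, and the row of `u` depends only on `d(u, a)`. When `d(u, a) < d`,
its nonzero entries all equal `e(u)` and sit at the vertices at distance `d` from `b` on the other
side, so it is a multiple of the row of `a`. Hence the rows of `a`, `b` and of one deepest vertex
on each side span the row space, and a triangular `4 × 4` minor shows they are independent.
-/

section Inertia

variable {m : Type*} [Fintype m] [DecidableEq m]

theorem charpoly_neg_eq {R : Type*} [CommRing R] (M : Matrix m m R) :
    (-M).charpoly = (-1) ^ Fintype.card m * M.charpoly.comp (-X) := by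
  have hchar : (-M).charmatrix = -(compRingHom (-X)).mapMatrix M.charmatrix := by
    ext1 i j
    by_cases hij : i = j
    · subst hij
      simp [charmatrix_apply_eq, add_comm]
    · simp [charmatrix_apply_ne, hij]
  rw [charpoly, hchar, det_neg, ← RingHom.map_det, charpoly, coe_compRingHom_apply]

theorem roots_charpoly_neg {R : Type*} [CommRing R] [IsDomain R] (M : Matrix m m R) :
    (-M).charpoly.roots = M.charpoly.roots.map (-·) := by
  rw [charpoly_neg_eq, ← C_1, ← C_neg, ← C_pow, roots_C_mul _ (by simp), roots_comp_neg_X]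

theorem posEigs_neg (M : Matrix m m ℝ) : posEigs (-M) = negEigs M := by
  simp [posEigs, negEigs, roots_charpoly_neg, Multiset.filter_map]

theorem charpoly_neg_eq_of_bipartite {R : Type*} [CommRing R] {M : Matrix m m R} (S : Set m)
    (hM : ∀ i j, (i ∈ S ↔ j ∈ S) → M i j = 0) : (-M).charpoly = M.charpoly := by
  classical
  let D : Matrix m m R := diagonal fun i ↦ if i ∈ S then 1 else -1
  have hDD : D * D = 1 := by
    rw [diagonal_mul_diagonal, ← diagonal_one]
    congr 1
    ext i
    split_ifs <;> simp
  have hDMD : D * (M * D) = -M := by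
    ext i j
    by_cases hi : i ∈ S <;> by_cases hj : j ∈ S <;>
      simp [D, diagonal_mul, mul_diagonal, hi, hj, hM i j]
  rw [← hDMD, charpoly_mul_comm, mul_assoc, hDD, mul_one]

theorem posEigs_eq_negEigs_of_bipartite {M : Matrix m m ℝ} (S : Set m)
    (hM : ∀ i j, (i ∈ S ↔ j ∈ S) → M i j = 0) : posEigs M = negEigs M := by
  rw [← posEigs_neg, posEigs, posEigs, charpoly_neg_eq_of_bipartite S hM]

theorem posEigs_add_negEigs_add_zeroEigs {M : Matrix m m ℝ} (hM : M.IsHermitian) :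
    posEigs M + negEigs M + zeroEigs M = Fintype.card m := by
  have hcard : Multiset.card M.charpoly.roots = Fintype.card m := by
    simp [hM.roots_charpoly_eq_eigenvalues]
  rw [← hcard]
  unfold posEigs negEigs zeroEigs
  induction M.charpoly.roots using Multiset.induction_on with
  | empty => simp
  | cons x s ih =>
    rcases lt_trichotomy x 0 with hx | rfl | hx
    · simp +arith [hx, hx.not_gt, hx.ne, ← ih]
    · simp +arith [← ih]
    · simp +arith [hx, hx.not_gt, hx.ne', ← ih]

theorem rank_add_zeroEigs {M : Matrix m m ℝ} (hM : M.IsHermitian) :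
    M.rank + zeroEigs M = Fintype.card m := by
  have hzero : zeroEigs M = Fintype.card {i // hM.eigenvalues i = 0} := by
    simp [zeroEigs, hM.roots_charpoly_eq_eigenvalues, Multiset.filter_map, Fintype.card_subtype,
      Finset.card_def]
  rw [hM.rank_eq_card_non_zero_eigs, hzero, Fintype.card_subtype_compl]
  exact Nat.sub_add_cancel (Fintype.card_subtype_le _)

theorem inertia_of_bipartite {M : Matrix m m ℝ} (hM : M.IsHermitian) (S : Set m)
    (hS : ∀ i j, (i ∈ S ↔ j ∈ S) → M i j = 0) {r : ℕ} (hr : M.rank = 2 * r) :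
    posEigs M = r ∧ negEigs M = r ∧ zeroEigs M = Fintype.card m - 2 * r := by
  have hsum := posEigs_add_negEigs_add_zeroEigs hM
  have hrank := rank_add_zeroEigs hM
  have hsymm := posEigs_eq_negEigs_of_bipartite S hS
  omega

end Inertia

section Rank

variable {K m n ι : Type*} [Field K] [Finite m] [Fintype n] [Fintype ι] [DecidableEq ι]

theorem rank_eq_card_of_det_submatrix_ne_zero {M : Matrix m n K} (f : ι → m) (g : ι → n)
    (hdet : (M.submatrix f g).det ≠ 0) (hspan : ∀ i, ∃ (c : K) (k : ι), M i = c • M (f k)) :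
    M.rank = Fintype.card ι := by
  have hli : LinearIndependent K fun k ↦ M (f k) :=
    .of_comp (LinearMap.funLeft K K g) (linearIndependent_rows_of_det_ne_zero hdet)
  have hrows : Submodule.span K (Set.range M.row) =
      Submodule.span K (Set.range fun k ↦ M (f k)) := by
    refine le_antisymm (Submodule.span_le.2 ?_) (Submodule.span_mono ?_)
    · rintro _ ⟨i, rfl⟩
      obtain ⟨c, k, hk⟩ := hspan i
      rw [row, hk]
      exact Submodule.smul_mem _ c (Submodule.subset_span ⟨k, rfl⟩)
    · rintro _ ⟨k, rfl⟩
      exact ⟨f k, rfl⟩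
  rw [rank_eq_finrank_span_row, hrows, finrank_span_eq_card hli]

end Rank

section Bridge

variable {V : Type*} {G : SimpleGraph V} {a b u v : V}

theorem dist_add_dist_add_one_le_length_of_mem_edges {p : G.Walk u v} (h : s(a, b) ∈ p.edges) :
    G.dist u a + G.dist v b + 1 ≤ p.length ∨ G.dist u b + G.dist v a + 1 ≤ p.length := by
  have hab : G.Adj a b := p.adj_of_mem_edges h
  have hlen {x y : V} (hxy : G.Adj x y) (hsub : hxy.toWalk.IsSubwalk p) :
      G.dist u x + G.dist v y + 1 ≤ p.length := by
    obtain ⟨q, r, rfl⟩ := hsub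
    have hq := dist_le q
    have hr := dist_le r.reverse
    simp only [Walk.length_append, Walk.length_reverse, Walk.length_cons, Walk.length_nil] at *
    omega
  exact ((Walk.isSubwalk_toWalk_iff_mem_edges hab).2 h).imp (hlen hab) (hlen hab.symm)

theorem exists_walk_notMem_edges_of_dist_le (hr : G.Reachable u a)
    (h : G.dist u a ≤ G.dist u b) : ∃ p : G.Walk u a, s(a, b) ∉ p.edges := by
  obtain ⟨p, hp⟩ := hr.exists_walk_length_eq_dist
  refine ⟨p, fun hmem ↦ ?_⟩
  have hlen := dist_add_dist_add_one_le_length_of_mem_edges hmem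
  omega

theorem mem_edges_of_isBridge_of_dist_le (hG : G.Connected) (hab : G.IsBridge s(a, b))
    (hu : G.dist u a ≤ G.dist u b) (hv : G.dist v b ≤ G.dist v a) (p : G.Walk u v) :
    s(a, b) ∈ p.edges := by
  obtain ⟨q, hq⟩ := exists_walk_notMem_edges_of_dist_le (hG u a) hu
  obtain ⟨r, hr⟩ := exists_walk_notMem_edges_of_dist_le (hG v b) hv
  rw [Sym2.eq_swap] at hr
  have hmem := isBridge_iff_forall_walk_mem_edges.1 hab ((q.reverse.append p).append r)
  simpa [hq, hr] using hmem

theorem dist_eq_of_isBridge_of_dist_le (hG : G.Connected) (hab : G.IsBridge s(a, b))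
    (hu : G.dist u a ≤ G.dist u b) (hv : G.dist v b ≤ G.dist v a) :
    G.dist u v = G.dist u a + G.dist v b + 1 := by
  have hadj : G.dist a b = 1 := dist_eq_one_iff_adj.2 (hab.reachable_iff_adj.1 (hG a b))
  apply le_antisymm
  · calc G.dist u v ≤ G.dist u a + G.dist a v := hG.dist_triangle
      _ ≤ G.dist u a + (G.dist a b + G.dist b v) := by gcongr; exact hG.dist_triangle
      _ = G.dist u a + G.dist v b + 1 := by rw [hadj, G.dist_comm (u := b)]; omega
  · obtain ⟨p, hp⟩ := hG.exists_walk_length_eq_dist u v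
    have hmem := mem_edges_of_isBridge_of_dist_le hG hab hu hv p
    have hlen := dist_add_dist_add_one_le_length_of_mem_edges hmem
    omega

theorem dist_eq_dist_add_one_of_isBridge (hG : G.Connected) (hab : G.IsBridge s(a, b))
    (hu : G.dist u a ≤ G.dist u b) : G.dist u b = G.dist u a + 1 := by
  simpa using dist_eq_of_isBridge_of_dist_le (v := b) hG hab hu (by simp)

end Bridge

section Eccentricity

variable {V : Type*} [Fintype V] {G : SimpleGraph V}

theorem dist_le_ecc (u v : V) : G.dist u v ≤ ecc G u :=
  Finset.le_sup (f := fun v ↦ G.dist u v) (mem_univ v)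

theorem ecc_le_iff {u : V} {k : ℕ} : ecc G u ≤ k ↔ ∀ v, G.dist u v ≤ k := by
  simp [ecc]

theorem exists_dist_eq_ecc (G : SimpleGraph V) (u : V) : ∃ v, G.dist u v = ecc G u := by
  obtain ⟨v, -, hv⟩ := exists_mem_eq_sup univ ⟨u, mem_univ u⟩ fun v ↦ G.dist u v
  exact ⟨v, hv.symm⟩

theorem dist_le_gdiam (u v : V) : G.dist u v ≤ gdiam G :=
  Finset.le_sup (f := fun p : V × V ↦ G.dist p.1 p.2) (mem_univ (u, v))

theorem exists_dist_eq_gdiam [Nonempty V] (G : SimpleGraph V) : ∃ u v, G.dist u v = gdiam G := by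
  obtain ⟨⟨u, v⟩, -, huv⟩ := exists_mem_eq_sup univ univ_nonempty fun p : V × V ↦ G.dist p.1 p.2
  exact ⟨u, v, huv.symm⟩

theorem isHermitian_eccMatrix (G : SimpleGraph V) : (eccMatrix G).IsHermitian := by
  ext u v
  simp [eccMatrix, G.dist_comm (u := v), min_comm (ecc G v)]

end Eccentricity

/-- A bridge `ab` of a connected graph both of whose ends have eccentricity `d + 1`: this is what
the middle edge of a diametral path of a tree of diameter `2d + 1` is. Adjacency of `a` and `b`
follows from connectedness. The side of `a` is encoded throughout as the set of vertices `u` with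
`G.dist u a ≤ G.dist u b`, where equality cannot occur. -/
structure IsCentralBridge {V : Type*} [Fintype V] (G : SimpleGraph V) (a b : V) (d : ℕ) :
    Prop where
  connected : G.Connected
  isBridge : G.IsBridge s(a, b)
  ecc_left : ecc G a = d + 1
  ecc_right : ecc G b = d + 1

namespace IsCentralBridge

variable {V : Type*} [Fintype V] {G : SimpleGraph V} {a b u v : V} {d : ℕ}

theorem symm (h : IsCentralBridge G a b d) : IsCentralBridge G b a d :=
  ⟨h.connected, Sym2.eq_swap (a := a) ▸ h.isBridge, h.ecc_right, h.ecc_left⟩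

theorem dist_eq (h : IsCentralBridge G a b d) (hu : G.dist u a ≤ G.dist u b)
    (hv : G.dist v b ≤ G.dist v a) : G.dist u v = G.dist u a + G.dist v b + 1 :=
  dist_eq_of_isBridge_of_dist_le h.connected h.isBridge hu hv

theorem dist_right_eq (h : IsCentralBridge G a b d) (hu : G.dist u a ≤ G.dist u b) :
    G.dist u b = G.dist u a + 1 :=
  dist_eq_dist_add_one_of_isBridge h.connected h.isBridge hu

theorem dist_left_le (h : IsCentralBridge G a b d) (hu : G.dist u a ≤ G.dist u b) :
    G.dist u a ≤ d := by
  have hub := dist_le_ecc (G := G) b u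
  rw [G.dist_comm, h.dist_right_eq hu, h.ecc_right] at hub
  omega

theorem exists_dist_left_eq (h : IsCentralBridge G a b d) :
    ∃ u, G.dist u a ≤ G.dist u b ∧ G.dist u a = d := by
  obtain ⟨u, hu⟩ := exists_dist_eq_ecc G b
  rw [G.dist_comm, h.ecc_right] at hu
  have hside : G.dist u a ≤ G.dist u b := by
    have hua := dist_le_ecc (G := G) a u
    rw [G.dist_comm, h.ecc_left] at hua
    omega
  have hub := h.dist_right_eq hside
  exact ⟨u, hside, by omega⟩

theorem ecc_eq (h : IsCentralBridge G a b d) (hu : G.dist u a ≤ G.dist u b) :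
    ecc G u = G.dist u a + d + 1 := by
  apply le_antisymm
  · refine ecc_le_iff.2 fun v ↦ ?_
    calc G.dist u v ≤ G.dist u a + G.dist a v := h.connected.dist_triangle
      _ ≤ G.dist u a + ecc G a := by gcongr; exact dist_le_ecc a v
      _ = G.dist u a + d + 1 := by rw [h.ecc_left, add_assoc]
  · obtain ⟨v, hv, hvd⟩ := h.symm.exists_dist_left_eq
    rw [← hvd, ← h.dist_eq hu hv]
    exact dist_le_ecc u v

theorem eccMatrix_apply_of_same_side (h : IsCentralBridge G a b d)
    (hu : G.dist u a ≤ G.dist u b) (hv : G.dist v a ≤ G.dist v b) : eccMatrix G u v = 0 := by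
  have htri : G.dist u v ≤ G.dist u a + G.dist a v := h.connected.dist_triangle
  have hua := h.dist_left_le hu
  have hva := h.dist_left_le hv
  rw [G.dist_comm (u := a)] at htri
  simp only [eccMatrix, of_apply, h.ecc_eq hu, h.ecc_eq hv]
  exact if_neg (by omega)

theorem eccMatrix_apply_of_opposite_sides (h : IsCentralBridge G a b d)
    (hu : G.dist u a ≤ G.dist u b) (hv : G.dist v b ≤ G.dist v a) :
    eccMatrix G u v =
      if G.dist u a = d ∨ G.dist v b = d then (G.dist u a + G.dist v b + 1 : ℝ) else 0 := by
  have hua := h.dist_left_le hu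
  have hvb := h.symm.dist_left_le hv
  simp only [eccMatrix, of_apply, h.ecc_eq hu, h.symm.ecc_eq hv, h.dist_eq hu hv]
  push_cast
  exact if_congr (by omega) rfl rfl

theorem eccMatrix_row_eq_of_dist_eq (h : IsCentralBridge G a b d)
    (hu : G.dist u a ≤ G.dist u b) (hv : G.dist v a ≤ G.dist v b)
    (huv : G.dist u a = G.dist v a) : eccMatrix G u = eccMatrix G v := by
  ext w
  rcases le_total (G.dist w a) (G.dist w b) with hw | hw
  · rw [h.eccMatrix_apply_of_same_side hu hw, h.eccMatrix_apply_of_same_side hv hw]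
  · rw [h.eccMatrix_apply_of_opposite_sides hu hw, h.eccMatrix_apply_of_opposite_sides hv hw, huv]

theorem eccMatrix_row_eq_smul (h : IsCentralBridge G a b d) (hu : G.dist u a ≤ G.dist u b)
    (hud : G.dist u a ≠ d) :
    eccMatrix G u = ((ecc G u : ℝ) / ecc G a) • eccMatrix G a := by
  have ha : G.dist a a ≤ G.dist a b := by simp
  have hd : 0 ≠ d := by
    have hle := h.dist_left_le hu
    omega
  ext w
  rw [Pi.smul_apply, smul_eq_mul, h.ecc_eq hu, h.ecc_left]
  rcases le_total (G.dist w a) (G.dist w b) with hw | hw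
  · rw [h.eccMatrix_apply_of_same_side hu hw, h.eccMatrix_apply_of_same_side ha hw, mul_zero]
  · rw [h.eccMatrix_apply_of_opposite_sides hu hw, h.eccMatrix_apply_of_opposite_sides ha hw]
    by_cases hwd : G.dist w b = d
    · simp only [hwd, or_true, if_true, SimpleGraph.dist_self]
      push_cast
      field_simp
      ring
    · simp [hwd, hud, hd]

theorem exists_eccMatrix_row_eq_smul (h : IsCentralBridge G a b d)
    (hu : G.dist u a ≤ G.dist u b) (hud : G.dist u a = d) (hv : G.dist v a ≤ G.dist v b) :
    ∃ c : ℝ, eccMatrix G v = c • eccMatrix G a ∨ eccMatrix G v = c • eccMatrix G u := by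
  by_cases hvd : G.dist v a = d
  · exact ⟨1, .inr (by rw [one_smul, h.eccMatrix_row_eq_of_dist_eq hv hu (hvd.trans hud.symm)])⟩
  · exact ⟨_, .inl (h.eccMatrix_row_eq_smul hv hvd)⟩

theorem eccMatrix_submatrix (h : IsCentralBridge G a b d) (hd : d ≠ 0)
    (hu : G.dist u a ≤ G.dist u b) (hud : G.dist u a = d)
    (hv : G.dist v b ≤ G.dist v a) (hvd : G.dist v b = d) :
    (eccMatrix G).submatrix ![a, u, b, v] ![v, b, u, a] =
      !![(d + 1 : ℝ), 0, 0, 0; 2 * d + 1, d + 1, 0, 0; 0, 0, d + 1, 0; 0, 0, 2 * d + 1, d + 1] := by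
  ext i j
  fin_cases i <;> fin_cases j <;>
    simp [h.eccMatrix_apply_of_same_side, h.symm.eccMatrix_apply_of_same_side,
      h.eccMatrix_apply_of_opposite_sides, h.symm.eccMatrix_apply_of_opposite_sides,
      hud, hvd, hud ▸ hu, hvd ▸ hv, hd.symm, two_mul]

theorem rank_eccMatrix (h : IsCentralBridge G a b d) (hd : d ≠ 0) : (eccMatrix G).rank = 4 := by
  obtain ⟨u, hu, hud⟩ := h.exists_dist_left_eq
  obtain ⟨v, hv, hvd⟩ := h.symm.exists_dist_left_eq
  refine rank_eq_card_of_det_submatrix_ne_zero ![a, u, b, v] ![v, b, u, a] ?_ fun w ↦ ?_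
  · rw [h.eccMatrix_submatrix hd hu hud hv hvd]
    have hne : (d + 1 : ℝ) ≠ 0 := by positivity
    rw [det_of_isLowerTriangular]
    · simp [Fin.prod_univ_four, hne]
    · intro i j hij
      fin_cases i <;> fin_cases j <;> first | rfl | exact absurd hij (by decide)
  · rcases le_total (G.dist w a) (G.dist w b) with hw | hw
    · obtain ⟨c, hc | hc⟩ := h.exists_eccMatrix_row_eq_smul hu hud hw
      exacts [⟨c, 0, hc⟩, ⟨c, 1, hc⟩]
    · obtain ⟨c, hc | hc⟩ := h.symm.exists_eccMatrix_row_eq_smul hv hvd hw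
      exacts [⟨c, 2, hc⟩, ⟨c, 3, hc⟩]

theorem eccMatrix_apply_eq_zero_of_side_iff (h : IsCentralBridge G a b d)
    (huv : G.dist u a ≤ G.dist u b ↔ G.dist v a ≤ G.dist v b) : eccMatrix G u v = 0 := by
  by_cases hu : G.dist u a ≤ G.dist u b
  · exact h.eccMatrix_apply_of_same_side hu (huv.1 hu)
  · have hv := mt huv.2 hu
    exact h.symm.eccMatrix_apply_of_same_side (le_of_not_ge hu) (le_of_not_ge hv)

end IsCentralBridge

section Centre

variable {V : Type*} [Fintype V] {G : SimpleGraph V} {a b x y : V} {d : ℕ}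

theorem ecc_eq_of_dist_eq_gdiam (hG : G.Connected) (hab : G.IsBridge s(a, b))
    (hxa : G.dist x a = d) (hyb : G.dist y b = d) (hxy : G.dist x y = 2 * d + 1)
    (hdiam : gdiam G = 2 * d + 1) : ecc G a = d + 1 := by
  have hpath : G.dist x y ≤ G.dist x a + G.dist y a := by
    rw [G.dist_comm (u := y)]
    exact hG.dist_triangle
  have hpath' : G.dist x y ≤ G.dist x b + G.dist y b := by
    rw [G.dist_comm (u := y)]
    exact hG.dist_triangle
  have hba : G.IsBridge s(b, a) := Sym2.eq_swap (a := a) ▸ hab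
  have hx : G.dist x a ≤ G.dist x b := by
    by_contra! hlt
    have := dist_eq_dist_add_one_of_isBridge hG hba hlt.le
    omega
  have hy : G.dist y b ≤ G.dist y a := by
    by_contra! hlt
    have := dist_eq_dist_add_one_of_isBridge hG hab hlt.le
    omega
  apply le_antisymm
  · refine ecc_le_iff.2 fun w ↦ ?_
    rw [G.dist_comm]
    rcases le_total (G.dist w a) (G.dist w b) with hw | hw
    · have hwy := dist_eq_of_isBridge_of_dist_le hG hab hw hy
      have hle := dist_le_gdiam (G := G) w y
      omega
    · have hxw := dist_eq_of_isBridge_of_dist_le hG hab hx hw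
      have hwa := dist_eq_dist_add_one_of_isBridge hG hba hw
      have hle := dist_le_gdiam (G := G) x w
      omega
  · have hya := dist_eq_dist_add_one_of_isBridge hG hba hy
    rw [← hyb, ← hya, G.dist_comm]
    exact dist_le_ecc a y

theorem exists_isCentralBridge_of_isTree (hG : G.IsTree) (hdiam : gdiam G = 2 * d + 1) :
    ∃ a b, IsCentralBridge G a b d := by
  have := hG.connected.nonempty
  obtain ⟨x, y, hxy⟩ := exists_dist_eq_gdiam G
  obtain ⟨p, hp⟩ := hG.connected.exists_walk_length_eq_dist x y
  have hadj : G.Adj (p.getVert d) (p.getVert (d + 1)) := p.adj_getVert_succ (by omega)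
  have hab := isAcyclic_iff_forall_adj_isBridge.1 hG.isAcyclic hadj
  have htake := length_eq_dist_of_subwalk hp (p.isSubwalk_take d)
  have hdrop := length_eq_dist_of_subwalk hp (p.isSubwalk_drop (d + 1))
  rw [Walk.take_length] at htake
  rw [Walk.drop_length, G.dist_comm] at hdrop
  refine ⟨_, _, hG.connected, hab, ?_, ?_⟩
  · exact ecc_eq_of_dist_eq_gdiam (x := x) (y := y) hG.connected hab
      (by omega) (by omega) (by omega) hdiam
  · rw [Sym2.eq_swap] at hab
    have hyx := G.dist_comm.trans hxy
    exact ecc_eq_of_dist_eq_gdiam (x := y) (y := x) hG.connected hab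
      (by omega) (by omega) (by omega) hdiam

end Centre

theorem stmt2_general {V : Type*} [Fintype V] [DecidableEq V] {G : SimpleGraph V} {a b : V}
    {d : ℕ} (h : IsCentralBridge G a b d) (hd : 1 ≤ d) :
    posEigs (eccMatrix G) = 2 ∧ negEigs (eccMatrix G) = 2 ∧
      zeroEigs (eccMatrix G) = Fintype.card V - 4 :=
  inertia_of_bipartite (isHermitian_eccMatrix G) {u | G.dist u a ≤ G.dist u b}
    (fun _ _ ↦ h.eccMatrix_apply_eq_zero_of_side_iff)
    (h.rank_eccMatrix (Nat.one_le_iff_ne_zero.1 hd))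

/-- A tree on `n ≥ 4` vertices with odd diameter `2d+1` has eccentricity matrix with exactly
two positive and two negative eigenvalues, i.e., inertia `(2, 2, n-4)`. -/
theorem stmt2 {V : Type*} [Fintype V] [DecidableEq V] (T : SimpleGraph V) (n d : ℕ)
    (hT : T.IsTree) (hn : Fintype.card V = n) (h4 : 4 ≤ n) (hd : 1 ≤ d)
    (hdiam : gdiam T = 2*d + 1) :
    posEigs (eccMatrix T) = 2 ∧ negEigs (eccMatrix T) = 2 ∧
      zeroEigs (eccMatrix T) = n - 4 := by
  obtain ⟨a, b, hab⟩ := exists_isCentralBridge_of_isTree hT hdiam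
  exact hn ▸ stmt2_general hab hd
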